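/- arXiv:1201.5334 — 4 statements merged into one kernel-verified Lean document; each statement's English description precedes it below -/
import Mathlib

section
/- If the mean noise operator and the mean disturbance operator of a measuring process are scalar multiples of the identity (equivalently, the mean error and mean disturbance are independent of the object state), then the Heisenberg-type inequality holds: for a finite-dimensional measuring process (ℂᵐ, ξ, U, M) for ℂⁿ and Hermitian n×n matrices A and B, if n(A) = Tr_K[N(A)(I⊗|ξ⟩⟨ξ|)] = c·I and d(B) = Tr_K[D(B)(I⊗|ξ⟩⟨ξ|)] = c'·I for some scalars c, c' ∈ ℂ, then for every density matrix ρ on ℂⁿ, ε(A;ρ)·η(B;ρ) ≥ (1/2)·|Tr[(AB − BA)ρ]|. -/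
open ComplexOrder Kronecker Matrix

/-- The rank-one projection `|ξ⟩⟨ξ|` onto a vector `ξ`. -/
noncomputable def rankOneProj {m : ℕ} (ξ : Fin m → ℂ) : Matrix (Fin m) (Fin m) ℂ :=
  Matrix.vecMulVec ξ (star ξ)

/-- The partial trace over the second tensor factor. -/
noncomputable def trK {n m : ℕ} (X : Matrix (Fin n × Fin m) (Fin n × Fin m) ℂ) :
    Matrix (Fin n) (Fin n) ℂ :=
  Matrix.of fun i j => ∑ k, X (i, k) (j, k)

/-- The noise operator `N(A) = U†(I⊗M)U − A⊗I` of a measuring process. -/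
noncomputable def noiseOp {n m : ℕ} (U : Matrix (Fin n × Fin m) (Fin n × Fin m) ℂ)
    (M : Matrix (Fin m) (Fin m) ℂ) (A : Matrix (Fin n) (Fin n) ℂ) :
    Matrix (Fin n × Fin m) (Fin n × Fin m) ℂ :=
  Uᴴ * ((1 : Matrix (Fin n) (Fin n) ℂ) ⊗ₖ M) * U - A ⊗ₖ (1 : Matrix (Fin m) (Fin m) ℂ)

/-- The disturbance operator `D(B) = U†(B⊗I)U − B⊗I` of a measuring process. -/
noncomputable def distOp {n m : ℕ} (U : Matrix (Fin n × Fin m) (Fin n × Fin m) ℂ)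
    (B : Matrix (Fin n) (Fin n) ℂ) :
    Matrix (Fin n × Fin m) (Fin n × Fin m) ℂ :=
  Uᴴ * (B ⊗ₖ (1 : Matrix (Fin m) (Fin m) ℂ)) * U - B ⊗ₖ (1 : Matrix (Fin m) (Fin m) ℂ)

/-- The rms noise `ε(A;ρ) = (Tr[N(A)²(ρ⊗|ξ⟩⟨ξ|)])^{1/2}`. -/
noncomputable def rmsNoise {n m : ℕ} (U : Matrix (Fin n × Fin m) (Fin n × Fin m) ℂ)
    (M : Matrix (Fin m) (Fin m) ℂ) (ξ : Fin m → ℂ) (A ρ : Matrix (Fin n) (Fin n) ℂ) : ℝ :=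
  Real.sqrt ((noiseOp U M A * noiseOp U M A * (ρ ⊗ₖ rankOneProj ξ)).trace.re)

/-- The rms disturbance `η(B;ρ) = (Tr[D(B)²(ρ⊗|ξ⟩⟨ξ|)])^{1/2}`. -/
noncomputable def rmsDist {n m : ℕ} (U : Matrix (Fin n × Fin m) (Fin n × Fin m) ℂ)
    (ξ : Fin m → ℂ) (B ρ : Matrix (Fin n) (Fin n) ℂ) : ℝ :=
  Real.sqrt ((distOp U B * distOp U B * (ρ ⊗ₖ rankOneProj ξ)).trace.re)

/-- The standard deviation of a Hermitian matrix `C` in the state `τ`: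
`σ(C;τ)² = Tr[C²τ] − (Tr[Cτ])²`. -/
noncomputable def stddev {k : ℕ} (C τ : Matrix (Fin k) (Fin k) ℂ) : ℝ :=
  Real.sqrt ((C * C * τ).trace.re - ((C * τ).trace.re) ^ 2)

theorem aux_trK {n m : ℕ} (Z : Matrix (Fin n × Fin m) (Fin n × Fin m) ℂ)
    (R : Matrix (Fin n) (Fin n) ℂ) :
    (Z * (R ⊗ₖ (1 : Matrix (Fin m) (Fin m) ℂ))).trace = (trK Z * R).trace := by
  simp only [Matrix.trace, Matrix.diag_apply, Matrix.mul_apply, trK, Matrix.of_apply,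
    Fintype.sum_prod_type, Matrix.kroneckerMap_apply, Matrix.one_apply, mul_ite, mul_one, mul_zero,
    Finset.sum_ite_eq', Finset.sum_ite_eq, Finset.mem_univ, if_true, Finset.sum_mul]
  refine Finset.sum_congr rfl fun i _ => ?_
  rw [Finset.sum_comm]

theorem aux_scalar {n m : ℕ} (X : Matrix (Fin n × Fin m) (Fin n × Fin m) ℂ)
    (P : Matrix (Fin m) (Fin m) ℂ) (c : ℂ)
    (h : trK (X * ((1 : Matrix (Fin n) (Fin n) ℂ) ⊗ₖ P)) = c • (1 : Matrix (Fin n) (Fin n) ℂ))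
    (R : Matrix (Fin n) (Fin n) ℂ) :
    (X * (R ⊗ₖ P)).trace = c * R.trace := by
  have : R ⊗ₖ P = ((1 : Matrix (Fin n) (Fin n) ℂ) ⊗ₖ P) * (R ⊗ₖ (1 : Matrix (Fin m) (Fin m) ℂ)) := by
    rw [← Matrix.mul_kronecker_mul, one_mul, mul_one]
  rw [this, ← mul_assoc, aux_trK, h]
  simp

theorem aux_comm {n m : ℕ} (X : Matrix (Fin n × Fin m) (Fin n × Fin m) ℂ)
    (P : Matrix (Fin m) (Fin m) ℂ) (c : ℂ)
    (h : trK (X * ((1 : Matrix (Fin n) (Fin n) ℂ) ⊗ₖ P)) = c • (1 : Matrix (Fin n) (Fin n) ℂ))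
    (B ρ : Matrix (Fin n) (Fin n) ℂ) :
    (X * (B ⊗ₖ (1 : Matrix (Fin m) (Fin m) ℂ)) * (ρ ⊗ₖ P)).trace
      = ((B ⊗ₖ (1 : Matrix (Fin m) (Fin m) ℂ)) * X * (ρ ⊗ₖ P)).trace := by
  rw [Matrix.trace_mul_cycle (B ⊗ₖ (1 : Matrix (Fin m) (Fin m) ℂ)), Matrix.trace_mul_comm _ X,
    mul_assoc, ← Matrix.mul_kronecker_mul, ← Matrix.mul_kronecker_mul, one_mul, mul_one,
    aux_scalar X P c h, aux_scalar X P c h, Matrix.trace_mul_comm]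

theorem aux_robertson {ι : Type*} [Fintype ι] [DecidableEq ι] (N D σ : Matrix ι ι ℂ)
    (hN : N.IsHermitian) (hD : D.IsHermitian) (hσ : σ.PosSemidef) :
    (1 / 2) * ‖((N * D - D * N) * σ).trace‖ ≤
      Real.sqrt (N * N * σ).trace.re * Real.sqrt (D * D * σ).trace.re := by
  set z := ((N * D - D * N) * σ).trace with hz
  have hpos : ∀ C : Matrix ι ι ℂ, 0 ≤ (Cᴴ * C * σ).trace.re := by
    intro C
    have h := (hσ.mul_mul_conjTranspose_same C).trace_nonneg
    rw [Matrix.trace_mul_cycle] at h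
    exact (Complex.le_def.1 h).1
  have hNN := hpos N
  have hDD := hpos D
  rw [hN.eq] at hNN
  rw [hD.eq] at hDD
  have hstar : star z = -z := by
    rw [hz, ← Matrix.trace_conjTranspose, Matrix.conjTranspose_mul, Matrix.conjTranspose_sub,
      Matrix.conjTranspose_mul, Matrix.conjTranspose_mul, hN.eq, hD.eq, hσ.isHermitian.eq,
      Matrix.trace_mul_comm, ← Matrix.trace_neg, ← neg_mul, neg_sub]
  have hre : z.re = 0 := by
    have := congrArg Complex.re hstar
    simp at this
    linarith
  have hnorm : ‖z‖ = |z.im| := by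
    rw [← Complex.abs_im_eq_norm.2 hre]
  have hquad : ∀ x : ℝ, 0 ≤ (D * D * σ).trace.re * (x * x) + z.im * x + (N * N * σ).trace.re := by
    intro x
    have h := hpos (N - (Complex.I * x) • D)
    have e : (N - (Complex.I * x) • D)ᴴ * (N - (Complex.I * x) • D) * σ
        = N * N * σ + ((x * x : ℝ) : ℂ) • (D * D * σ)
          - (Complex.I * x) • ((N * D - D * N) * σ) := by
      have : (N - (Complex.I * x) • D)ᴴ = N + (Complex.I * x) • D := by
        rw [Matrix.conjTranspose_sub, Matrix.conjTranspose_smul, hN.eq, hD.eq]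
        simp
      rw [this]
      have hI : ((x * x : ℝ) : ℂ) = -((Complex.I * x) * (Complex.I * x)) := by
        push_cast
        linear_combination ((x:ℂ)^2) * Complex.I_mul_I
      rw [hI]
      simp only [add_mul, mul_sub, sub_mul, smul_mul_assoc, mul_smul_comm, smul_sub, smul_add, smul_smul,
        neg_smul]
      abel
    rw [e, Matrix.trace_sub, Matrix.trace_add, Matrix.trace_smul, Matrix.trace_smul, ← hz] at h
    simp [hre] at h
    linarith
  have hd := discrim_le_zero hquad
  rw [discrim] at hd
  rw [hnorm, ← Real.sqrt_mul hNN]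
  apply Real.le_sqrt_of_sq_le
  rw [mul_pow, sq_abs]
  linarith

/-- If the mean noise operator and the mean disturbance operator are scalar,
then the Heisenberg-type inequality holds. -/
theorem heisenberg_type_of_state_independent_noise_disturbance {n m : ℕ}
    (hn : 0 < n) (hm : 0 < m)
    (ξ : Fin m → ℂ) (hξ : star ξ ⬝ᵥ ξ = 1)
    (U : Matrix (Fin n × Fin m) (Fin n × Fin m) ℂ)
    (hU : U * Uᴴ = 1) (hU' : Uᴴ * U = 1)
    (M : Matrix (Fin m) (Fin m) ℂ) (hM : M.IsHermitian)
    (A B : Matrix (Fin n) (Fin n) ℂ) (hA : A.IsHermitian) (hB : B.IsHermitian)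
    (c c' : ℂ)
    (hmeanN : trK (noiseOp U M A * ((1 : Matrix (Fin n) (Fin n) ℂ) ⊗ₖ rankOneProj ξ))
      = c • (1 : Matrix (Fin n) (Fin n) ℂ))
    (hmeanD : trK (distOp U B * ((1 : Matrix (Fin n) (Fin n) ℂ) ⊗ₖ rankOneProj ξ))
      = c' • (1 : Matrix (Fin n) (Fin n) ℂ)) :
    ∀ ρ : Matrix (Fin n) (Fin n) ℂ, ρ.PosSemidef → ρ.trace = 1 →
      rmsNoise U M ξ A ρ * rmsDist U ξ B ρ ≥
        (1 / 2) * ‖((A * B - B * A) * ρ).trace‖ := by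
  intro ρ hρ hρ1
  have hP : (rankOneProj ξ).PosSemidef := Matrix.posSemidef_vecMulVec_self_star ξ
  have hσ : (ρ ⊗ₖ rankOneProj ξ).PosSemidef := hρ.kronecker hP
  have hPt : (rankOneProj ξ).trace = 1 := by
    rw [rankOneProj, Matrix.trace_vecMulVec, dotProduct_comm, hξ]
  have hk1 : (A ⊗ₖ (1 : Matrix (Fin m) (Fin m) ℂ)).IsHermitian := by
    rw [Matrix.IsHermitian, Matrix.conjTranspose_kronecker, hA.eq, Matrix.conjTranspose_one]
  have hk2 : (B ⊗ₖ (1 : Matrix (Fin m) (Fin m) ℂ)).IsHermitian := by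
    rw [Matrix.IsHermitian, Matrix.conjTranspose_kronecker, hB.eq, Matrix.conjTranspose_one]
  have hk3 : ((1 : Matrix (Fin n) (Fin n) ℂ) ⊗ₖ M).IsHermitian := by
    rw [Matrix.IsHermitian, Matrix.conjTranspose_kronecker, hM.eq, Matrix.conjTranspose_one]
  have hN : (noiseOp U M A).IsHermitian :=
    (Matrix.isHermitian_conjTranspose_mul_mul U hk3).sub hk1
  have hD : (distOp U B).IsHermitian :=
    (Matrix.isHermitian_conjTranspose_mul_mul U hk2).sub hk2
  have h1 := aux_comm _ _ c hmeanN B ρ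
  have h2 := aux_comm _ _ c' hmeanD A ρ
  have key := aux_robertson _ _ _ hN hD hσ
  have hXY : (noiseOp U M A + A ⊗ₖ (1 : Matrix (Fin m) (Fin m) ℂ)) *
      (distOp U B + B ⊗ₖ (1 : Matrix (Fin m) (Fin m) ℂ)) =
      (distOp U B + B ⊗ₖ (1 : Matrix (Fin m) (Fin m) ℂ)) *
      (noiseOp U M A + A ⊗ₖ (1 : Matrix (Fin m) (Fin m) ℂ)) := by
    have e : ∀ V W : Matrix (Fin n × Fin m) (Fin n × Fin m) ℂ,
        (Uᴴ * V * U) * (Uᴴ * W * U) = Uᴴ * (V * W) * U := by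
      intro V W
      calc (Uᴴ * V * U) * (Uᴴ * W * U) = Uᴴ * V * (U * Uᴴ) * W * U := by
            simp only [mul_assoc]
        _ = _ := by rw [hU]; simp only [mul_assoc, one_mul]
    rw [noiseOp, distOp, sub_add_cancel, sub_add_cancel, e, e, ← Matrix.mul_kronecker_mul,
      ← Matrix.mul_kronecker_mul]
    simp only [one_mul, mul_one]
  have hAB : ((A ⊗ₖ (1 : Matrix (Fin m) (Fin m) ℂ)) * (B ⊗ₖ (1 : Matrix (Fin m) (Fin m) ℂ)) *
      (ρ ⊗ₖ rankOneProj ξ)).trace = (A * B * ρ).trace := by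
    rw [← Matrix.mul_kronecker_mul, ← Matrix.mul_kronecker_mul, one_mul, one_mul,
      Matrix.trace_kronecker, hPt, mul_one]
  have hBA : ((B ⊗ₖ (1 : Matrix (Fin m) (Fin m) ℂ)) * (A ⊗ₖ (1 : Matrix (Fin m) (Fin m) ℂ)) *
      (ρ ⊗ₖ rankOneProj ξ)).trace = (B * A * ρ).trace := by
    rw [← Matrix.mul_kronecker_mul, ← Matrix.mul_kronecker_mul, one_mul, one_mul,
      Matrix.trace_kronecker, hPt, mul_one]
  have hT := congrArg (fun Z => (Z * (ρ ⊗ₖ rankOneProj ξ)).trace) hXY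
  simp only [add_mul, mul_add, Matrix.trace_add] at hT
  rw [hAB, hBA] at hT
  have hfin : ((noiseOp U M A * distOp U B - distOp U B * noiseOp U M A) *
      (ρ ⊗ₖ rankOneProj ξ)).trace = -((A * B - B * A) * ρ).trace := by
    rw [sub_mul, sub_mul, Matrix.trace_sub, Matrix.trace_sub]
    linear_combination hT - h1 + h2
  rw [hfin, norm_neg] at key
  exact key
end

section
/- Quantitative generalization of the Wigner-Araki-Yanase theorem: let (ℂᵐ, ξ, U, M) be a finite-dimensional measuring process for ℂⁿ, and let L₁ be a Hermitian n×n matrix and L₂ a Hermitian m×m matrix such that U(L₁⊗I + I⊗L₂) = (L₁⊗I + I⊗L₂)U (additive conservation law) and ML₂ = L₂M. Then for every Hermitian n×n matrix A and every density matrix ρ on ℂⁿ, ε(A;ρ)²·(4·σ(L₁;ρ)² + 4·σ(L₂;|ξ⟩⟨ξ|)²) ≥ |Tr[(AL₁ − L₁A)ρ]|². -/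
open ComplexOrder Kronecker Matrix

theorem way_sub_kron {n m : ℕ} (A B : Matrix (Fin n) (Fin n) ℂ) (C : Matrix (Fin m) (Fin m) ℂ) :
    (A - B) ⊗ₖ C = A ⊗ₖ C - B ⊗ₖ C := by
  ext i j
  simp [Matrix.kronecker_apply, sub_mul]

theorem way_kron_sub {n m : ℕ} (A : Matrix (Fin n) (Fin n) ℂ) (B C : Matrix (Fin m) (Fin m) ℂ) :
    A ⊗ₖ (B - C) = A ⊗ₖ B - A ⊗ₖ C := by
  ext i j
  simp [Matrix.kronecker_apply, mul_sub]

theorem way_pos {ι : Type*} [Fintype ι] [DecidableEq ι] (X τ : Matrix ι ι ℂ) (hτ : τ.PosSemidef) :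
    0 ≤ (Xᴴ * X * τ).trace.re := by
  have h := (hτ.mul_mul_conjTranspose_same X).trace_nonneg
  rw [Matrix.trace_mul_cycle] at h
  have h2 := (Complex.le_def.mp h).1
  simpa using h2

theorem way_real {ι : Type*} [Fintype ι] [DecidableEq ι] (C τ : Matrix ι ι ℂ)
    (hC : C.IsHermitian) (hτ : τ.IsHermitian) : (C * τ).trace = ((C * τ).trace.re : ℂ) := by
  have h : star (C * τ).trace = (C * τ).trace := by
    rw [← Matrix.trace_conjTranspose, Matrix.conjTranspose_mul, hC.eq, hτ.eq, Matrix.trace_mul_comm]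
  exact (Complex.conj_eq_iff_re.mp h).symm

theorem way_robertson {ι : Type*} [Fintype ι] [DecidableEq ι] (N K τ : Matrix ι ι ℂ)
    (hN : N.IsHermitian) (hK : K.IsHermitian) (hτ : τ.PosSemidef) :
    ‖((N * K - K * N) * τ).trace‖ ^ 2 ≤ 4 * (N * N * τ).trace.re * (K * K * τ).trace.re := by
  set z := ((N * K - K * N) * τ).trace with hz
  have hre : z.re = 0 := by
    have h : star z = -z := by
      rw [hz, ← Matrix.trace_conjTranspose, Matrix.conjTranspose_mul, Matrix.conjTranspose_sub,
        Matrix.conjTranspose_mul, Matrix.conjTranspose_mul, hN.eq, hK.eq, hτ.1.eq,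
        Matrix.trace_mul_comm, ← Matrix.trace_neg, ← Matrix.neg_mul, neg_sub]
    have := congrArg Complex.re h
    simp at this
    linarith
  have hq : ∀ t : ℝ, 0 ≤ (K * K * τ).trace.re * (t * t) + (-z.im) * t + (N * N * τ).trace.re := by
    intro t
    have h := way_pos (N + (Complex.I * t) • K) τ hτ
    have e : (N + (Complex.I * t) • K)ᴴ * (N + (Complex.I * t) • K) * τ =
        N * N * τ + (Complex.I * t) • ((N * K - K * N) * τ) + ((t * t : ℝ) : ℂ) • (K * K * τ) := by
      rw [Matrix.conjTranspose_add, Matrix.conjTranspose_smul, hN.eq, hK.eq]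
      have : star (Complex.I * (t:ℂ)) = -(Complex.I * t) := by simp
      rw [this]
      simp only [Matrix.add_mul, Matrix.mul_add, Matrix.sub_mul, Matrix.smul_mul, Matrix.mul_smul,
        smul_sub, neg_smul, Matrix.neg_mul]
      have h3 : -(Complex.I * (t:ℂ)) * (Complex.I * t) = ((t * t : ℝ) : ℂ) := by
        push_cast
        linear_combination (-(t:ℂ)*t) * Complex.I_mul_I
      rw [← h3]
      module
    rw [e, Matrix.trace_add, Matrix.trace_add, Matrix.trace_smul, Matrix.trace_smul, ← hz] at h
    simp at h
    nlinarith [h]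
  have hd := discrim_le_zero hq
  rw [discrim] at hd
  rw [← Complex.normSq_eq_norm_sq, Complex.normSq_apply, hre]
  nlinarith [hd]

theorem way_var {k : ℕ} (C τ : Matrix (Fin k) (Fin k) ℂ) (hC : C.IsHermitian)
    (hτ : τ.PosSemidef) (h1 : τ.trace = 1) : ∃ C' : Matrix (Fin k) (Fin k) ℂ, ∃ a : ℂ,
    C' = C - a • 1 ∧ C'.IsHermitian ∧ (C' * τ).trace = 0 ∧
      stddev C τ ^ 2 = (C' * C' * τ).trace.re := by
  have hr := way_real C τ hC hτ.1
  set a : ℝ := (C * τ).trace.re with ha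
  have hH : (C - (a : ℂ) • (1 : Matrix (Fin k) (Fin k) ℂ)).IsHermitian := by
    rw [Matrix.IsHermitian, Matrix.conjTranspose_sub, Matrix.conjTranspose_smul, hC.eq]
    simp
  have hv : ((C - (a : ℂ) • (1 : Matrix (Fin k) (Fin k) ℂ)) *
      (C - (a : ℂ) • (1 : Matrix (Fin k) (Fin k) ℂ)) * τ).trace.re
      = (C * C * τ).trace.re - a ^ 2 := by
    have : ((C - (a : ℂ) • (1 : Matrix (Fin k) (Fin k) ℂ)) *
      (C - (a : ℂ) • (1 : Matrix (Fin k) (Fin k) ℂ)) * τ).trace =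
      (C * C * τ).trace - ((a ^ 2 : ℝ) : ℂ) := by
      simp only [Matrix.sub_mul, Matrix.mul_sub, Matrix.smul_mul, Matrix.mul_smul, Matrix.one_mul,
        Matrix.mul_one, Matrix.trace_sub, Matrix.trace_smul, hr, h1, smul_eq_mul]
      push_cast
      ring
    rw [this, Complex.sub_re, Complex.ofReal_re]
  refine ⟨_, a, rfl, hH, ?_, ?_⟩
  · rw [Matrix.sub_mul, Matrix.trace_sub, hr, Matrix.smul_mul, Matrix.one_mul, Matrix.trace_smul, h1]
    simp
  · rw [hv, stddev, Real.sq_sqrt]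
    rw [← ha, ← hv]
    have := way_pos (C - (a : ℂ) • (1 : Matrix (Fin k) (Fin k) ℂ)) τ hτ
    rwa [hH.eq] at this

/-- Quantitative generalization of the Wigner-Araki-Yanase theorem. -/
theorem quantitative_WAY {n m : ℕ} (hn : 0 < n) (hm : 0 < m)
    (ξ : Fin m → ℂ) (hξ : star ξ ⬝ᵥ ξ = 1)
    (U : Matrix (Fin n × Fin m) (Fin n × Fin m) ℂ)
    (hU : U * Uᴴ = 1) (hU' : Uᴴ * U = 1)
    (M : Matrix (Fin m) (Fin m) ℂ) (hM : M.IsHermitian)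
    (L₁ : Matrix (Fin n) (Fin n) ℂ) (hL₁ : L₁.IsHermitian)
    (L₂ : Matrix (Fin m) (Fin m) ℂ) (hL₂ : L₂.IsHermitian)
    (hcons : U * (L₁ ⊗ₖ (1 : Matrix (Fin m) (Fin m) ℂ)
        + (1 : Matrix (Fin n) (Fin n) ℂ) ⊗ₖ L₂)
      = (L₁ ⊗ₖ (1 : Matrix (Fin m) (Fin m) ℂ)
        + (1 : Matrix (Fin n) (Fin n) ℂ) ⊗ₖ L₂) * U)
    (hML₂ : M * L₂ = L₂ * M) :
    ∀ (A : Matrix (Fin n) (Fin n) ℂ), A.IsHermitian →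
      ∀ ρ : Matrix (Fin n) (Fin n) ℂ, ρ.PosSemidef → ρ.trace = 1 →
        rmsNoise U M ξ A ρ ^ 2 * (4 * stddev L₁ ρ ^ 2 + 4 * stddev L₂ (rankOneProj ξ) ^ 2) ≥
          ‖((A * L₁ - L₁ * A) * ρ).trace‖ ^ 2 := by
  intro A hA ρ hρ hρ1
  have hω : (rankOneProj ξ).PosSemidef := Matrix.posSemidef_vecMulVec_self_star ξ
  have hω1 : (rankOneProj ξ).trace = 1 := by
    rw [rankOneProj, Matrix.trace_vecMulVec, dotProduct_comm, hξ]
  have hτ : (ρ ⊗ₖ rankOneProj ξ).PosSemidef := hρ.kronecker hω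
  obtain ⟨K₁, a, hK₁, hK₁H, hK₁0, hv1⟩ := way_var L₁ ρ hL₁ hρ hρ1
  obtain ⟨K₂, b, hK₂, hK₂H, hK₂0, hv2⟩ := way_var L₂ _ hL₂ hω hω1
  rw [hv1, hv2]
  have hNH : (noiseOp U M A).IsHermitian := by
    rw [Matrix.IsHermitian, noiseOp]
    simp only [Matrix.conjTranspose_sub, Matrix.conjTranspose_mul,
      Matrix.conjTranspose_kronecker, Matrix.conjTranspose_one, hM.eq, hA.eq,
      Matrix.conjTranspose_conjTranspose, Matrix.mul_assoc]
  set N := noiseOp U M A with hN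
  set K := K₁ ⊗ₖ (1 : Matrix (Fin m) (Fin m) ℂ) + (1 : Matrix (Fin n) (Fin n) ℂ) ⊗ₖ K₂ with hK
  have hKH : K.IsHermitian := by
    rw [Matrix.IsHermitian, hK]
    simp only [Matrix.conjTranspose_add, Matrix.conjTranspose_kronecker, Matrix.conjTranspose_one,
      hK₁H.eq, hK₂H.eq]
  have hKL : K = (L₁ ⊗ₖ (1 : Matrix (Fin m) (Fin m) ℂ)
        + (1 : Matrix (Fin n) (Fin n) ℂ) ⊗ₖ L₂) - (a + b) • 1 := by
    rw [hK, hK₁, hK₂, way_sub_kron, way_kron_sub, Matrix.smul_kronecker,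
      Matrix.kronecker_smul, Matrix.one_kronecker_one, add_smul]
    abel
  have hUK : U * K = K * U := by
    rw [hKL, Matrix.mul_sub, Matrix.sub_mul, hcons]
    simp
  have hUK' : Uᴴ * K = K * Uᴴ := by
    have := congrArg Matrix.conjTranspose hUK
    rw [Matrix.conjTranspose_mul, Matrix.conjTranspose_mul, hKH.eq] at this
    exact this.symm
  have hMK : ((1 : Matrix (Fin n) (Fin n) ℂ) ⊗ₖ M) * K = K * ((1 : Matrix (Fin n) (Fin n) ℂ) ⊗ₖ M) := by
    have : M * K₂ = K₂ * M := by
      rw [hK₂, Matrix.mul_sub, Matrix.sub_mul, hML₂]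
      simp
    rw [hK, Matrix.mul_add, Matrix.add_mul]
    simp only [← Matrix.mul_kronecker_mul, Matrix.one_mul, Matrix.mul_one, this]
  have hcomm : N * K - K * N = -((A * L₁ - L₁ * A) ⊗ₖ (1 : Matrix (Fin m) (Fin m) ℂ)) := by
    have h1 : Uᴴ * ((1 : Matrix (Fin n) (Fin n) ℂ) ⊗ₖ M) * U * K =
        K * (Uᴴ * ((1 : Matrix (Fin n) (Fin n) ℂ) ⊗ₖ M) * U) := by
      rw [Matrix.mul_assoc, hUK, ← Matrix.mul_assoc, Matrix.mul_assoc Uᴴ, hMK, ← Matrix.mul_assoc,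
        hUK']
      simp only [Matrix.mul_assoc]
    have h2 : (A ⊗ₖ (1 : Matrix (Fin m) (Fin m) ℂ)) * K - K * (A ⊗ₖ (1 : Matrix (Fin m) (Fin m) ℂ))
        = (A * L₁ - L₁ * A) ⊗ₖ (1 : Matrix (Fin m) (Fin m) ℂ) := by
      have h3 : A * L₁ - L₁ * A = A * K₁ - K₁ * A := by
        rw [hK₁, Matrix.mul_sub, Matrix.sub_mul]
        simp
      rw [h3, hK, Matrix.mul_add, Matrix.add_mul, way_sub_kron]
      simp only [← Matrix.mul_kronecker_mul, Matrix.one_mul, Matrix.mul_one]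
      abel
    rw [hN, noiseOp, Matrix.sub_mul, Matrix.mul_sub, h1, ← h2]
    abel
  have hrob := way_robertson N K _ hNH hKH hτ
  rw [hcomm, Matrix.neg_mul, Matrix.trace_neg, norm_neg, ← Matrix.mul_kronecker_mul,
    Matrix.trace_kronecker, Matrix.one_mul, hω1, mul_one] at hrob
  have hKK : (K * K * (ρ ⊗ₖ rankOneProj ξ)).trace =
      (K₁ * K₁ * ρ).trace + (K₂ * K₂ * rankOneProj ξ).trace := by
    rw [hK]
    simp only [Matrix.mul_add, Matrix.add_mul, ← Matrix.mul_kronecker_mul, Matrix.one_mul,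
      Matrix.mul_one, Matrix.trace_add, Matrix.trace_kronecker, hK₁0, hK₂0, hρ1, hω1]
    ring
  have hε : rmsNoise U M ξ A ρ ^ 2 = (N * N * (ρ ⊗ₖ rankOneProj ξ)).trace.re := by
    rw [rmsNoise, Real.sq_sqrt]
    have := way_pos N _ hτ
    rwa [hNH.eq] at this
  rw [hKK, Complex.add_re] at hrob
  rw [hε]
  linarith [hrob]
end

section
/- The rms noise of a measuring process is determined by its POVM moments: let (ℂᵐ, ξ, U, M) be a finite-dimensional measuring process for ℂⁿ, and for k = 1, 2 define the moment operators Π⁽ᵏ⁾ = Tr_K[U†(I⊗Mᵏ)U·(I⊗|ξ⟩⟨ξ|)]. Then for every Hermitian n×n matrix A and every density matrix ρ on ℂⁿ, ε(A;ρ)² = Tr[Π⁽²⁾ρ] − Tr[Π⁽¹⁾ρA] − Tr[Π⁽¹⁾Aρ] + Tr[A²ρ]. -/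
open ComplexOrder Kronecker Matrix

theorem trace_trK_mul {n m : ℕ} (Z : Matrix (Fin n × Fin m) (Fin n × Fin m) ℂ)
    (B : Matrix (Fin n) (Fin n) ℂ) :
    (trK Z * B).trace = (Z * (B ⊗ₖ (1 : Matrix (Fin m) (Fin m) ℂ))).trace := by
  simp only [trK, Matrix.trace, Matrix.diag, Matrix.mul_apply, Matrix.of_apply,
    Fintype.sum_prod_type, Matrix.kroneckerMap_apply, Matrix.one_apply, mul_ite, mul_one, mul_zero,
    Finset.sum_ite_eq', Finset.mem_univ, if_true, Finset.sum_mul]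
  refine Finset.sum_congr rfl fun i _ => ?_
  rw [Finset.sum_comm]

theorem trace_trK_proj {n m : ℕ} (Y : Matrix (Fin n × Fin m) (Fin n × Fin m) ℂ)
    (P : Matrix (Fin m) (Fin m) ℂ) (B : Matrix (Fin n) (Fin n) ℂ) :
    (trK (Y * ((1 : Matrix (Fin n) (Fin n) ℂ) ⊗ₖ P)) * B).trace = (Y * (B ⊗ₖ P)).trace := by
  rw [trace_trK_mul, Matrix.mul_assoc, ← Matrix.mul_kronecker_mul, one_mul, mul_one]

/-- The rms noise of a measuring process is determined by its POVM moments. -/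
theorem rmsNoise_eq_moments {n m : ℕ} (hn : 0 < n) (hm : 0 < m)
    (ξ : Fin m → ℂ) (hξ : star ξ ⬝ᵥ ξ = 1)
    (U : Matrix (Fin n × Fin m) (Fin n × Fin m) ℂ)
    (hU : U * Uᴴ = 1) (hU' : Uᴴ * U = 1)
    (M : Matrix (Fin m) (Fin m) ℂ) (hM : M.IsHermitian)
    (A : Matrix (Fin n) (Fin n) ℂ) (hA : A.IsHermitian)
    (ρ : Matrix (Fin n) (Fin n) ℂ) (hρ : ρ.PosSemidef) (hρtr : ρ.trace = 1) :
    rmsNoise U M ξ A ρ ^ 2 =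
      (trK (Uᴴ * ((1 : Matrix (Fin n) (Fin n) ℂ) ⊗ₖ (M * M)) * U *
            ((1 : Matrix (Fin n) (Fin n) ℂ) ⊗ₖ rankOneProj ξ)) * ρ).trace.re
        - (trK (Uᴴ * ((1 : Matrix (Fin n) (Fin n) ℂ) ⊗ₖ M) * U *
            ((1 : Matrix (Fin n) (Fin n) ℂ) ⊗ₖ rankOneProj ξ)) * ρ * A).trace.re
        - (trK (Uᴴ * ((1 : Matrix (Fin n) (Fin n) ℂ) ⊗ₖ M) * U *
            ((1 : Matrix (Fin n) (Fin n) ℂ) ⊗ₖ rankOneProj ξ)) * A * ρ).trace.re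
        + (A * A * ρ).trace.re := by
  have hP : (rankOneProj ξ).trace = 1 := by
    rw [rankOneProj, Matrix.trace_vecMulVec, dotProduct_comm, hξ]
  have hPp : (rankOneProj ξ).PosSemidef := Matrix.posSemidef_vecMulVec_self_star ξ
  have hNh : (noiseOp U M A)ᴴ = noiseOp U M A := by
    simp only [noiseOp, Matrix.conjTranspose_sub, Matrix.conjTranspose_mul,
      Matrix.conjTranspose_kronecker, Matrix.conjTranspose_conjTranspose, hA.eq, hM.eq,
      Matrix.conjTranspose_one, Matrix.mul_assoc]
  have hnn : 0 ≤ (noiseOp U M A * noiseOp U M A * (ρ ⊗ₖ rankOneProj ξ)).trace.re := by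
    have h := ((hρ.kronecker hPp).mul_mul_conjTranspose_same (noiseOp U M A)).trace_nonneg
    rw [hNh, Matrix.trace_mul_comm, ← Matrix.mul_assoc] at h
    exact (Complex.le_def.1 h).1
  rw [rmsNoise, Real.sq_sqrt hnn, Matrix.mul_assoc (trK _) ρ A, Matrix.mul_assoc (trK _) A ρ,
    trace_trK_proj, trace_trK_proj, trace_trK_proj]
  have hX : Uᴴ * ((1 : Matrix (Fin n) (Fin n) ℂ) ⊗ₖ (M * M)) * U =
      (Uᴴ * ((1 : Matrix (Fin n) (Fin n) ℂ) ⊗ₖ M) * U) *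
      (Uᴴ * ((1 : Matrix (Fin n) (Fin n) ℂ) ⊗ₖ M) * U) := by
    have : ((1 : Matrix (Fin n) (Fin n) ℂ) ⊗ₖ (M * M)) =
      ((1 : Matrix (Fin n) (Fin n) ℂ) ⊗ₖ M) * (U * Uᴴ) * ((1 : Matrix (Fin n) (Fin n) ℂ) ⊗ₖ M) := by
      rw [hU, mul_one, ← Matrix.mul_kronecker_mul, one_mul]
    rw [this]
    simp only [Matrix.mul_assoc]
  rw [hX, noiseOp]
  generalize Uᴴ * ((1 : Matrix (Fin n) (Fin n) ℂ) ⊗ₖ M) * U = X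
  have e1 : (ρ * A) ⊗ₖ rankOneProj ξ
      = (ρ ⊗ₖ rankOneProj ξ) * (A ⊗ₖ (1 : Matrix (Fin m) (Fin m) ℂ)) := by
    rw [← Matrix.mul_kronecker_mul, mul_one]
  have e2 : (A * ρ) ⊗ₖ rankOneProj ξ
      = (A ⊗ₖ (1 : Matrix (Fin m) (Fin m) ℂ)) * (ρ ⊗ₖ rankOneProj ξ) := by
    rw [← Matrix.mul_kronecker_mul, one_mul]
  have e3 : (A * A * ρ).trace = ((A ⊗ₖ (1 : Matrix (Fin m) (Fin m) ℂ)) *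
      (A ⊗ₖ (1 : Matrix (Fin m) (Fin m) ℂ)) * (ρ ⊗ₖ rankOneProj ξ)).trace := by
    rw [← Matrix.mul_kronecker_mul, ← Matrix.mul_kronecker_mul, Matrix.trace_kronecker, one_mul,
      one_mul, hP, mul_one]
  rw [e1, e2, e3, ← Matrix.mul_assoc X (ρ ⊗ₖ rankOneProj ξ), Matrix.trace_mul_comm (X * (ρ ⊗ₖ rankOneProj ξ))]
  simp only [Matrix.sub_mul, Matrix.mul_sub, Matrix.trace_sub, Complex.sub_re, Matrix.mul_assoc]
  ring
end

section
/- The rms disturbance of a measuring process is determined by its nonselective operation: let (ℂᵐ, ξ, U, M) be a finite-dimensional measuring process for ℂⁿ, and define the linear map T on n×n complex matrices by T(X) = Tr_K[U(X⊗|ξ⟩⟨ξ|)U†]. Then for every Hermitian n×n matrix B and every density matrix ρ on ℂⁿ, η(B;ρ)² = Tr[B²·T(ρ)] − Tr[B·T(ρB)] − Tr[B·T(Bρ)] + Tr[B²ρ]. -/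
open ComplexOrder Kronecker Matrix

/-- The nonselective operation `T(X) = Tr_K[U(X⊗|ξ⟩⟨ξ|)U†]` of a measuring process. -/
noncomputable def nonselOp {n m : ℕ} (U : Matrix (Fin n × Fin m) (Fin n × Fin m) ℂ)
    (ξ : Fin m → ℂ) (X : Matrix (Fin n) (Fin n) ℂ) : Matrix (Fin n) (Fin n) ℂ :=
  trK (U * (X ⊗ₖ rankOneProj ξ) * Uᴴ)

theorem trace_mul_trK {n m : ℕ} (A : Matrix (Fin n) (Fin n) ℂ)
    (X : Matrix (Fin n × Fin m) (Fin n × Fin m) ℂ) :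
    (A * trK X).trace = ((A ⊗ₖ (1 : Matrix (Fin m) (Fin m) ℂ)) * X).trace := by
  simp only [Matrix.trace, Matrix.diag, Matrix.mul_apply, trK, Matrix.of_apply,
    Matrix.kroneckerMap_apply, Fintype.sum_prod_type, Matrix.one_apply, mul_ite, mul_one,
    mul_zero, ite_mul, zero_mul, Finset.sum_ite_eq, Finset.mem_univ, if_true, Finset.mul_sum]
  refine Finset.sum_congr rfl fun i _ => ?_
  exact Finset.sum_comm

theorem trace_mul_nonselOp {n m : ℕ} (U : Matrix (Fin n × Fin m) (Fin n × Fin m) ℂ)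
    (ξ : Fin m → ℂ) (A X : Matrix (Fin n) (Fin n) ℂ) :
    (A * nonselOp U ξ X).trace =
      (Uᴴ * (A ⊗ₖ (1 : Matrix (Fin m) (Fin m) ℂ)) * U * (X ⊗ₖ rankOneProj ξ)).trace := by
  rw [nonselOp, trace_mul_trK, ← Matrix.mul_assoc, Matrix.trace_mul_comm]
  simp only [Matrix.mul_assoc]

/-- The rms disturbance of a measuring process is determined by its
nonselective operation. -/
theorem rmsDist_eq_operation {n m : ℕ} (hn : 0 < n) (hm : 0 < m)
    (ξ : Fin m → ℂ) (hξ : star ξ ⬝ᵥ ξ = 1)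
    (U : Matrix (Fin n × Fin m) (Fin n × Fin m) ℂ)
    (hU : U * Uᴴ = 1) (hU' : Uᴴ * U = 1)
    (M : Matrix (Fin m) (Fin m) ℂ) (hM : M.IsHermitian)
    (B : Matrix (Fin n) (Fin n) ℂ) (hB : B.IsHermitian)
    (ρ : Matrix (Fin n) (Fin n) ℂ) (hρ : ρ.PosSemidef) (hρtr : ρ.trace = 1) :
    rmsDist U ξ B ρ ^ 2 =
      (B * B * nonselOp U ξ ρ).trace.re
        - (B * nonselOp U ξ (ρ * B)).trace.re
        - (B * nonselOp U ξ (B * ρ)).trace.re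
        + (B * B * ρ).trace.re := by
  have hD : (distOp U B).IsHermitian := by
    unfold distOp Matrix.IsHermitian
    simp only [Matrix.conjTranspose_sub, Matrix.conjTranspose_mul, Matrix.conjTranspose_kronecker,
      Matrix.conjTranspose_conjTranspose, Matrix.conjTranspose_one, hB.eq, Matrix.mul_assoc]
  have hR : (ρ ⊗ₖ rankOneProj ξ).PosSemidef :=
    hρ.kronecker (Matrix.posSemidef_vecMulVec_self_star ξ)
  have hnn : 0 ≤ (distOp U B * distOp U B * (ρ ⊗ₖ rankOneProj ξ)).trace.re := by
    have h := (hR.mul_mul_conjTranspose_same (distOp U B)).trace_nonneg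
    rw [hD.eq, Matrix.trace_mul_comm, ← Matrix.mul_assoc] at h
    exact (Complex.le_def.1 h).1
  have hP : (rankOneProj ξ).trace = 1 := by
    rw [rankOneProj, Matrix.trace_vecMulVec, dotProduct_comm, hξ]
  have h4 : (B * B * ρ).trace = ((B * B * ρ) ⊗ₖ rankOneProj ξ).trace := by
    rw [Matrix.trace_kronecker, hP, mul_one]
  have key : (distOp U B * distOp U B * (ρ ⊗ₖ rankOneProj ξ)).trace =
      (B * B * nonselOp U ξ ρ).trace - (B * nonselOp U ξ (ρ * B)).trace
        - (B * nonselOp U ξ (B * ρ)).trace + (B * B * ρ).trace := by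
    rw [h4]
    simp only [trace_mul_nonselOp]
    have e1 : (ρ * B) ⊗ₖ rankOneProj ξ = (ρ ⊗ₖ rankOneProj ξ) * (B ⊗ₖ 1) := by
      rw [← Matrix.mul_kronecker_mul, Matrix.mul_one]
    have e2 : (B * ρ) ⊗ₖ rankOneProj ξ = (B ⊗ₖ 1) * (ρ ⊗ₖ rankOneProj ξ) := by
      rw [← Matrix.mul_kronecker_mul, Matrix.one_mul]
    have e3 : (B * B) ⊗ₖ (1 : Matrix (Fin m) (Fin m) ℂ) = (B ⊗ₖ 1) * (B ⊗ₖ 1) := by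
      rw [← Matrix.mul_kronecker_mul, Matrix.one_mul]
    have e4 : (B * B * ρ) ⊗ₖ rankOneProj ξ =
        (B ⊗ₖ 1) * (B ⊗ₖ 1) * (ρ ⊗ₖ rankOneProj ξ) := by
      rw [← e3, ← Matrix.mul_kronecker_mul, Matrix.one_mul]
    rw [e1, e2, e3, e4, distOp]
    generalize B ⊗ₖ (1 : Matrix (Fin m) (Fin m) ℂ) = C
    generalize ρ ⊗ₖ rankOneProj ξ = R
    have e5 : Uᴴ * (C * C) * U = (Uᴴ * C * U) * (Uᴴ * C * U) := by
      calc Uᴴ * (C * C) * U = Uᴴ * C * 1 * C * U := by simp only [Matrix.mul_assoc, Matrix.one_mul]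
        _ = _ := by rw [← hU]; simp only [Matrix.mul_assoc]
    rw [e5]
    generalize Uᴴ * C * U = V
    have e6 : (V * (R * C)).trace = (C * V * R).trace := by
      rw [← Matrix.mul_assoc, Matrix.trace_mul_comm, Matrix.mul_assoc]
    rw [e6, ← Matrix.mul_assoc V C R]
    simp only [Matrix.sub_mul, Matrix.mul_sub, Matrix.trace_sub]
    ring
  rw [rmsDist, Real.sq_sqrt hnn, key]
  simp only [Complex.add_re, Complex.sub_re]
end
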